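/- A temporal graph G is a T-comparability graph (admits a TTO) if and only if it admits an ATTO, if and only if Ness(G) induces an acyclic digraph. -/

import Mathlib

def IsOrientation {V : Type*} (G : SimpleGraph V) (O : V → V → Prop) : Prop :=
  (∀ a b, O a b → G.Adj a b) ∧ (∀ a b, G.Adj a b → (O a b ↔ ¬ O b a))

def IsTTO {V : Type*} (G : SimpleGraph V) (lam : V → V → ℕ) (O : V → V → Prop) : Prop :=
  IsOrientation G O ∧
    ∀ a b c, O a b → O b c → lam a b ≤ lam b c → O a c ∧ lam b c ≤ lam a c

/-- Arc of the implication digraph `Imp(G)`. -/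
def ImpArc {V : Type*} (G : SimpleGraph V) (lam : V → V → ℕ) (p q : V × V) : Prop :=
  ∃ a b c, G.Adj a b ∧ G.Adj b c ∧ lam a b ≤ lam b c ∧
    (¬ G.Adj a c ∨ lam a c < lam b c) ∧
    ((p = (a, b) ∧ q = (c, b)) ∨ (p = (b, c) ∧ q = (b, a)))

/-- `(a,b,c,d)` is a correlated monolabel triangle with common label `t`. -/
def CorrTri {V : Type*} (G : SimpleGraph V) (lam : V → V → ℕ) (a b c d : V) (t : ℕ) : Prop :=
  G.Adj a b ∧ G.Adj b c ∧ G.Adj c a ∧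
    lam a b = t ∧ lam b c = t ∧ lam c a = t ∧
    G.Adj b d ∧ lam b d ≤ t ∧ G.Adj c d ∧ t < lam c d ∧
    (G.Adj a d → lam a d < t)

/-- Arc of the augmented implication digraph `Aug(G)`. -/
def AugArc {V : Type*} (G : SimpleGraph V) (lam : V → V → ℕ) (p q : V × V) : Prop :=
  ImpArc G lam p q ∨
    ∃ a b c d t, CorrTri G lam a b c d t ∧
      ((p = (b, c) ∧ q = (a, c)) ∨ (p = (c, a) ∧ q = (c, b)))

/-- `p` forces `q`: directed path (possibly empty) from `p` to `q` in `Aug(G)`. -/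
def Forces {V : Type*} (G : SimpleGraph V) (lam : V → V → ℕ) : V × V → V × V → Prop :=
  Relation.ReflTransGen (AugArc G lam)

/-- The set of necessary arcs of `G`. -/
def Ness {V : Type*} (G : SimpleGraph V) (lam : V → V → ℕ) : Set (V × V) :=
  {p | G.Adj p.1 p.2 ∧ Forces G lam (p.2, p.1) p}

/-- Almost-temporal transitive orientation. -/
def IsATTO {V : Type*} (G : SimpleGraph V) (lam : V → V → ℕ) (O : V → V → Prop) : Prop :=
  IsOrientation G O ∧ ∀ p q, O p.1 p.2 → Forces G lam p q → O q.1 q.2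

/-- `Ness(G)` induces an acyclic digraph (no directed cycle, including 2-cycles). -/
def NessAcyclic {V : Type*} (G : SimpleGraph V) (lam : V → V → ℕ) : Prop :=
  ¬ ∃ k : ℕ, 2 ≤ k ∧ ∃ v : ZMod k → V, Function.Injective v ∧
      ∀ i, (v i, v (i + 1)) ∈ Ness G lam

/-! A two-arc path `a → b → c` is forbidden when `Aug(G)` has the arcs `(a, b) → (c, b)` and
`(b, c) → (b, a)`, so an ATTO is an orientation without forbidden paths, and a TTO turns out to be
an ATTO without directed triangles. In an ATTO every directed triangle is monolabel, and reversing,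
for a fixed vertex `a`, the arcs opposite to `a` in all directed triangles through `a` gives an ATTO
in which `a` lies on no directed triangle; a vertex that lay on none still lies on none. Treating
the vertices of a finite set one after the other and passing to all of `V` by compactness gives a
TTO.

An arc of maximal label on a directed cycle of a TTO can be extended backwards along the whole
cycle, so a TTO has no directed cycle; it contains `Ness(G)`. Conversely, if no two opposite arcs
are both necessary, then an ATTO exists by the 2-SAT argument: a maximal set of arcs that is closed
under forcing and contains no two opposite arcs is an orientation. -/

section TwoSat

variable {α : Type*} {r : α → α → Prop} {σ : α → α} {S : Set α} {p : α}

/-- A partial assignment for an implication relation `r` on literals with negation `σ`: closed under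
implication and free of contradictory literals. -/
def IsConsistentClosed (r : α → α → Prop) (σ : α → α) (S : Set α) : Prop :=
  (∀ p ∈ S, ∀ q, r p q → q ∈ S) ∧ ∀ p ∈ S, σ p ∉ S

theorem IsConsistentClosed.sUnion {c : Set (Set α)} (hc : ∀ S ∈ c, IsConsistentClosed r σ S)
    (hchain : IsChain (· ⊆ ·) c) : IsConsistentClosed r σ (⋃₀ c) := by
  refine ⟨fun p ⟨S, hS, hp⟩ q hpq => ⟨S, hS, (hc S hS).1 p hp q hpq⟩, ?_⟩
  rintro p ⟨S, hS, hp⟩ ⟨T, hT, hσp⟩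
  rcases hchain.total hS hT with hST | hTS
  · exact (hc T hT).2 p (hST hp) hσp
  · exact (hc S hS).2 p hp (hTS hσp)

theorem IsConsistentClosed.union_consequences [IsTrans α r] (hσ : Function.Involutive σ)
    (hr : ∀ p q, r p q → r (σ q) (σ p)) (hS : IsConsistentClosed r σ S)
    (hp : σ p ∉ S) (hpp : ¬ r p (σ p)) : IsConsistentClosed r σ (S ∪ {q | r p q}) := by
  have contra : ∀ q, r p (σ q) → r q (σ p) := fun q hq => by simpa only [hσ q] using hr _ _ hq
  refine ⟨?_, ?_⟩
  · rintro q (hq | hq) s hqs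
    · exact Or.inl (hS.1 q hq s hqs)
    · exact Or.inr (IsTrans.trans _ _ _ hq hqs)
  · rintro q (hq | hq) (hσq | hσq)
    · exact hS.2 q hq hσq
    · exact hp (hS.1 q hq _ (contra q hσq))
    · exact hp (hS.1 _ hσq _ (hr _ _ hq))
    · exact hpp (IsTrans.trans _ _ _ hq (contra q hσq))

theorem exists_isConsistentClosed_iff_notMem [IsPreorder α r] (hσ : Function.Involutive σ)
    (hr : ∀ p q, r p q → r (σ q) (σ p)) (hcons : ∀ p, r p (σ p) → ¬ r (σ p) p) :
    ∃ S : Set α, IsConsistentClosed r σ S ∧ ∀ p, p ∈ S ↔ σ p ∉ S := by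
  obtain ⟨S, hS, hmax⟩ := zorn_subset {S | IsConsistentClosed r σ S}
    fun c hc hchain => ⟨⋃₀ c, .sUnion hc hchain, fun _ => Set.subset_sUnion_of_mem⟩
  have mem_of_notMem : ∀ p, σ p ∉ S → ¬ r p (σ p) → p ∈ S := fun p hp hpp =>
    hmax (hS.union_consequences hσ hr hp hpp) Set.subset_union_left (Or.inr (refl p))
  refine ⟨S, hS, fun p => ⟨hS.2 p, fun hσp => by_contra fun hp => ?_⟩⟩
  have hpσ : r p (σ p) := by_contra fun h => hp (mem_of_notMem p hσp h)
  exact hσp (mem_of_notMem (σ p) (by rwa [hσ p]) (by rw [hσ p]; exact hcons p hpσ))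

end TwoSat

section Orientation

variable {V : Type*} {G : SimpleGraph V} {O : V → V → Prop} {a b c x y : V}

theorem IsOrientation.asymm (h : IsOrientation G O) (hab : O a b) : ¬ O b a :=
  (h.2 a b (h.1 a b hab)).1 hab

theorem IsOrientation.irrefl (h : IsOrientation G O) : ¬ O a a :=
  fun haa => h.asymm haa haa

theorem IsOrientation.of_not (h : IsOrientation G O) (hab : G.Adj a b) (hba : ¬ O b a) : O a b :=
  (h.2 a b hab).2 hba

/-- The arcs `a → b → c → a` all belong to `O`: the obstruction to an ATTO being a TTO. Labels are
not mentioned because in an ATTO they are automatically equal, see `IsQuasiTTO.label_eq`. -/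
def DirectedTriangle {V : Type*} (O : V → V → Prop) (a b c : V) : Prop :=
  O a b ∧ O b c ∧ O c a

theorem DirectedTriangle.rotate (T : DirectedTriangle O a b c) : DirectedTriangle O b c a :=
  ⟨T.2.1, T.2.2, T.1⟩

/-- The relation `O` after reversing every arc opposite to `a` in a directed triangle through `a`,
which removes these triangles. -/
def flipAt {V : Type*} (O : V → V → Prop) (a x y : V) : Prop :=
  (O x y ∧ ¬ DirectedTriangle O a x y) ∨ DirectedTriangle O a y x

theorem IsOrientation.isOrientation_flipAt (h : IsOrientation G O) (a : V) :
    IsOrientation G (flipAt O a) := by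
  refine ⟨?_, fun x y hxy => ?_⟩
  · rintro x y (⟨hxy, -⟩ | T)
    · exact h.1 x y hxy
    · exact (h.1 y x T.2.1).symm
  · have hO : O x y ↔ ¬ O y x := h.2 x y hxy
    have hxT : DirectedTriangle O a x y → O x y := fun T => T.2.1
    have hyT : DirectedTriangle O a y x → O y x := fun T => T.2.1
    unfold flipAt
    tauto

theorem of_flipAt_of_not_directedTriangle (hT : ¬ DirectedTriangle O a y x)
    (hxy : flipAt O a x y) : O x y :=
  hxy.elim And.left fun T => (hT T).elim

theorem IsOrientation.not_directedTriangle_flipAt_self (h : IsOrientation G O) (a b c : V) :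
    ¬ DirectedTriangle (flipAt O a) a b c := by
  rintro ⟨hab, hbc, hca⟩
  have hab : O a b := of_flipAt_of_not_directedTriangle (fun T => h.irrefl T.2.2) hab
  have hca : O c a := of_flipAt_of_not_directedTriangle (fun T => h.irrefl T.1) hca
  rcases hbc with ⟨hbc, hT⟩ | T
  · exact hT ⟨hab, hbc, hca⟩
  · exact h.asymm hab T.2.2

end Orientation

section Temporal

variable {V : Type*} {G : SimpleGraph V} {lam : V → V → ℕ} {O : V → V → Prop}

/-- A temporally quasi-transitive orientation: the arc `ac` demanded by a TTO is only required to be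
an edge with a large enough label, its direction being left free. This is what TTOs and ATTOs have
in common, and amounts to closure under `Imp(G)`. -/
structure IsQuasiTTO {V : Type*} (G : SimpleGraph V) (lam : V → V → ℕ) (O : V → V → Prop) :
    Prop where
  isOrientation : IsOrientation G O
  adj_and_le : ∀ ⦃a b c⦄, O a b → O b c → lam a b ≤ lam b c → G.Adj a c ∧ lam b c ≤ lam a c

namespace IsQuasiTTO

variable {a b c d : V} {t : ℕ}

theorem label_eq (hsym : ∀ a b, lam a b = lam b a) (h : IsQuasiTTO G lam O)
    (T : DirectedTriangle O a b c) : lam a b = lam b c ∧ lam b c = lam c a := by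
  obtain ⟨hab, hbc, hca⟩ := T
  have hc : lam a b ≤ lam b c → lam b c ≤ lam c a := fun hl =>
    hsym a c ▸ (h.adj_and_le hab hbc hl).2
  have ha : lam b c ≤ lam c a → lam c a ≤ lam a b := fun hl =>
    hsym b a ▸ (h.adj_and_le hbc hca hl).2
  have hb : lam c a ≤ lam a b → lam a b ≤ lam b c := fun hl =>
    hsym c b ▸ (h.adj_and_le hca hab hl).2
  omega

theorem apex_arcs_of_corrTri (hsym : ∀ a b, lam a b = lam b a) (h : IsQuasiTTO G lam O)
    (hT : CorrTri G lam a b c d t) (hbc : O b c) : O d b ∧ O d c := by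
  obtain ⟨-, -, -, -, lbc, -, Abd, lbd, Acd, lcd, -⟩ := hT
  have hdc : O d c := h.1.of_not Acd.symm fun hcd => by
    have := (h.adj_and_le hbc hcd (by omega)).2
    omega
  refine ⟨h.1.of_not Abd.symm fun hbd => ?_, hdc⟩
  have := hsym c d
  have := (h.adj_and_le hbd hdc (by omega)).2
  omega

end IsQuasiTTO

theorem isTTO_iff (hsym : ∀ a b, lam a b = lam b a) :
    IsTTO G lam O ↔ IsQuasiTTO G lam O ∧ ∀ a b c, ¬ DirectedTriangle O a b c := by
  constructor
  · intro h
    have hq : IsQuasiTTO G lam O :=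
      ⟨h.1, fun a b c hab hbc hl => (h.2 a b c hab hbc hl).imp_left (h.1.1 a c)⟩
    refine ⟨hq, fun a b c T => ?_⟩
    exact h.1.asymm T.2.2 (h.2 a b c T.1 T.2.1 (hq.label_eq hsym T).1.le).1
  · rintro ⟨h, hT⟩
    refine ⟨h.1, fun a b c hab hbc hl => ?_⟩
    obtain ⟨Aac, hle⟩ := h.adj_and_le hab hbc hl
    exact ⟨h.1.of_not Aac fun hca => hT a b c ⟨hab, hbc, hca⟩, hle⟩

/-- The path `a → b → c` is forbidden: `Aug(G)` has the arcs `(a, b) → (c, b)` and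
`(b, c) → (b, a)`, because of a time-respecting path not spanned by a late enough edge or of a
correlated monolabel triangle. -/
def ForbiddenPath {V : Type*} (G : SimpleGraph V) (lam : V → V → ℕ) (a b c : V) : Prop :=
  (G.Adj a b ∧ G.Adj b c ∧ lam a b ≤ lam b c ∧ (¬ G.Adj a c ∨ lam a c < lam b c)) ∨
    ∃ d t, CorrTri G lam c a b d t

theorem ForbiddenPath.adj {a b c : V} (h : ForbiddenPath G lam a b c) :
    G.Adj a b ∧ G.Adj b c := by
  rcases h with ⟨Aab, Abc, -⟩ | ⟨d, t, -, Aab, Abc, -⟩ <;> exact ⟨Aab, Abc⟩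

theorem augArc_iff_forbiddenPath {p q : V × V} :
    AugArc G lam p q ↔ ∃ a b c, ForbiddenPath G lam a b c ∧
      ((p = (a, b) ∧ q = (c, b)) ∨ (p = (b, c) ∧ q = (b, a))) := by
  constructor
  · rintro (⟨a, b, c, Aab, Abc, hl, hac, hpq⟩ | ⟨a, b, c, d, t, hT, hpq⟩)
    · exact ⟨a, b, c, Or.inl ⟨Aab, Abc, hl, hac⟩, hpq⟩
    · exact ⟨b, c, a, Or.inr ⟨d, t, hT⟩, hpq⟩
  · rintro ⟨a, b, c, ⟨Aab, Abc, hl, hac⟩ | ⟨d, t, hT⟩, hpq⟩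
    · exact Or.inl ⟨a, b, c, Aab, Abc, hl, hac, hpq⟩
    · exact Or.inr ⟨c, a, b, d, t, hT, hpq⟩

theorem AugArc.swap {p q : V × V} (h : AugArc G lam p q) : AugArc G lam q.swap p.swap := by
  rw [augArc_iff_forbiddenPath] at h ⊢
  obtain ⟨a, b, c, hF, ⟨rfl, rfl⟩ | ⟨rfl, rfl⟩⟩ := h
  · exact ⟨a, b, c, hF, Or.inr ⟨rfl, rfl⟩⟩
  · exact ⟨a, b, c, hF, Or.inl ⟨rfl, rfl⟩⟩

theorem AugArc.adj {p q : V × V} (h : AugArc G lam p q) : G.Adj q.1 q.2 := by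
  obtain ⟨a, b, c, hF, ⟨-, rfl⟩ | ⟨-, rfl⟩⟩ := augArc_iff_forbiddenPath.1 h
  · exact hF.adj.2.symm
  · exact hF.adj.1.symm

theorem Forces.swap {p q : V × V} (h : Forces G lam p q) : Forces G lam q.swap p.swap := by
  induction h with
  | refl => exact .refl
  | tail _ hqr ih => exact ih.head hqr.swap

theorem Forces.adj {p q : V × V} (h : Forces G lam p q) (hp : G.Adj p.1 p.2) : G.Adj q.1 q.2 := by
  cases h with
  | refl => exact hp
  | tail _ hqr => exact hqr.adj

theorem isATTO_iff_forbiddenPath :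
    IsATTO G lam O ↔ IsOrientation G O ∧ ∀ a b c, ForbiddenPath G lam a b c → O a b → ¬ O b c := by
  constructor
  · refine fun h => ⟨h.1, fun a b c hF hab => h.1.asymm (h.2 (a, b) (c, b) hab (.single ?_))⟩
    exact augArc_iff_forbiddenPath.2 ⟨a, b, c, hF, Or.inl ⟨rfl, rfl⟩⟩
  · refine fun h => ⟨h.1, fun p q hp hpq => ?_⟩
    induction hpq with
    | refl => exact hp
    | tail _ hqr ih =>
      obtain ⟨a, b, c, hF, ⟨rfl, rfl⟩ | ⟨rfl, rfl⟩⟩ := augArc_iff_forbiddenPath.1 hqr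
      · exact h.1.of_not hF.adj.2.symm (h.2 a b c hF ih)
      · exact h.1.of_not hF.adj.1.symm fun hab => h.2 a b c hF hab ih

namespace IsATTO

variable {a b c d p q r x z : V}

theorem not_arc_of_forbiddenPath (h : IsATTO G lam O) (hF : ForbiddenPath G lam a b c)
    (hab : O a b) : ¬ O b c :=
  (isATTO_iff_forbiddenPath.1 h).2 a b c hF hab

theorem isQuasiTTO (h : IsATTO G lam O) : IsQuasiTTO G lam O := by
  refine ⟨h.1, fun a b c hab hbc hl => by_contra fun hcon => ?_⟩
  refine h.not_arc_of_forbiddenPath (Or.inl ⟨h.1.1 a b hab, h.1.1 b c hbc, hl, ?_⟩) hab hbc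
  rwa [not_and_or, not_le] at hcon

theorem arc_of_monolabel_path (hsym : ∀ a b, lam a b = lam b a) (h : IsATTO G lam O) {t : ℕ}
    (hqr : O q r) (hrp : O r p) (Apq : G.Adj p q)
    (lqr : lam q r = t) (lrp : lam r p = t) (lpq : lam p q = t)
    (hdq : O d q) (ldq : lam d q ≤ t) (hpd : G.Adj p d → lam p d < t) :
    O r d ∧ lam r d = t := by
  have hsrd := hsym r d
  obtain ⟨Adr, ldr⟩ := h.isQuasiTTO.adj_and_le hdq hqr (by omega)
  -- A later label on `rd` would make the triangle `p, q, r` correlated with `d`.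
  have lrd : lam r d = t := by
    by_contra hne
    have hT : CorrTri G lam p q r d t := ⟨Apq, h.1.1 q r hqr, h.1.1 r p hrp, lpq, lqr, lrp,
      (h.1.1 d q hdq).symm, hsym q d ▸ ldq, Adr.symm, by omega, hpd⟩
    exact h.not_arc_of_forbiddenPath (Or.inr ⟨d, t, hT⟩) hqr hrp
  refine ⟨h.1.of_not Adr.symm fun hdr => ?_, lrd⟩
  obtain ⟨Adp, ldp⟩ := h.isQuasiTTO.adj_and_le hdr hrp (by omega)
  have := hpd Adp.symm
  have := hsym p d
  omega

theorem arc_of_directedTriangle_of_corrTri_tail (hsym : ∀ a b, lam a b = lam b a)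
    (h : IsATTO G lam O) (T : DirectedTriangle O a b c) {t : ℕ} (hC : CorrTri G lam b x c d t)
    (hxc : O x c) : O a x := by
  obtain ⟨hdx, hdc⟩ := h.isQuasiTTO.apex_arcs_of_corrTri hsym hC hxc
  obtain ⟨lab, lca⟩ := h.isQuasiTTO.label_eq hsym T
  obtain ⟨Abx, -, -, lbx, -, lcb, -, lxd, -, lcd, hbd⟩ := hC
  have := hsym d x
  have := hsym b c
  have := hsym b d
  have := hsym x b
  have hbx : O b x := h.1.of_not Abx fun hxb => by
    obtain ⟨Adb, ldb⟩ := h.isQuasiTTO.adj_and_le hdx hxb (by omega)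
    have := hbd Adb.symm
    omega
  obtain ⟨Aax, -⟩ := h.isQuasiTTO.adj_and_le T.1 hbx (by omega)
  refine h.1.of_not Aax fun hxa => ?_
  have lxa := h.isQuasiTTO.label_eq hsym ⟨T.1, hbx, hxa⟩
  obtain ⟨had, lad⟩ := h.arc_of_monolabel_path hsym hxa T.1 Abx
    (by omega) (by omega) lbx hdx (by omega) hbd
  have ladc := h.isQuasiTTO.label_eq hsym ⟨had, hdc, T.2.2⟩
  have := hsym c d
  omega

theorem arc_of_directedTriangle_of_corrTri_head (hsym : ∀ a b, lam a b = lam b a)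
    (h : IsATTO G lam O) (T : DirectedTriangle O a b c) {t : ℕ} (hC : CorrTri G lam z c b d t)
    (hbz : O b z) : O z a := by
  obtain ⟨lab, lca⟩ := h.isQuasiTTO.label_eq hsym T
  obtain ⟨Azc, -, -, lzc, lcb, lbz, Acd, lcd, Abd, lbd, hzd⟩ := hC
  have := hsym c b
  have := hsym c d
  have := hsym b d
  have hdb : O d b := h.1.of_not Abd.symm fun hbd => by
    obtain ⟨Aad, lad⟩ := h.isQuasiTTO.adj_and_le T.1 hbd (by omega)
    have had : O a d := h.1.of_not Aad fun hda => by
      have := h.isQuasiTTO.label_eq hsym ⟨T.1, hbd, hda⟩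
      omega
    have := (h.isQuasiTTO.adj_and_le T.2.2 had (by omega)).2
    omega
  have hdc : O d c := h.1.of_not Acd.symm fun hcd => by
    have := (h.isQuasiTTO.adj_and_le hcd hdb (by omega)).2
    omega
  obtain ⟨Aaz, laz⟩ := h.isQuasiTTO.adj_and_le T.1 hbz (by omega)
  refine h.1.of_not Aaz.symm fun haz => ?_
  have lcz := (h.isQuasiTTO.adj_and_le T.2.2 haz (by omega)).2
  have := hsym z c
  obtain ⟨had, lad⟩ := h.arc_of_monolabel_path hsym T.2.2 haz Azc
    (by omega) (by omega) lzc hdc (by omega) hzd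
  have := (h.isQuasiTTO.adj_and_le had hdb (by omega)).2
  omega

theorem arc_of_directedTriangle_of_forbiddenPath_tail (hsym : ∀ a b, lam a b = lam b a)
    (h : IsATTO G lam O) (T : DirectedTriangle O a b c) (hF : ForbiddenPath G lam x c b)
    (hxc : O x c) : O a x := by
  rcases hF with ⟨-, Acb, lxc, hxb⟩ | ⟨d, t, hC⟩
  · obtain ⟨lab, lca⟩ := h.isQuasiTTO.label_eq hsym T
    have := hsym c b
    have hbx : G.Adj b x → lam b x < lam b c := fun Abx => by
      have := hxb.resolve_left (not_not_intro Abx.symm)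
      have := hsym b x
      omega
    exact (h.arc_of_monolabel_path hsym T.2.2 T.1 Acb.symm (by omega) lab rfl hxc (by omega) hbx).1
  · exact h.arc_of_directedTriangle_of_corrTri_tail hsym T hC hxc

theorem arc_of_directedTriangle_of_forbiddenPath_head (hsym : ∀ a b, lam a b = lam b a)
    (h : IsATTO G lam O) (T : DirectedTriangle O a b c) (hF : ForbiddenPath G lam c b z)
    (hbz : O b z) : O z a := by
  rcases hF with ⟨-, -, lbz, hcz⟩ | ⟨d, t, hC⟩
  · obtain ⟨lab, lca⟩ := h.isQuasiTTO.label_eq hsym T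
    have := hsym c b
    obtain ⟨Aaz, laz⟩ := h.isQuasiTTO.adj_and_le T.1 hbz (by omega)
    refine h.1.of_not Aaz.symm fun haz => ?_
    obtain ⟨Acz, lcz⟩ := h.isQuasiTTO.adj_and_le T.2.2 haz (by omega)
    have := hcz.resolve_left (not_not_intro Acz)
    omega
  · exact h.arc_of_directedTriangle_of_corrTri_head hsym T hC hbz

theorem isATTO_flipAt (hsym : ∀ a b, lam a b = lam b a) (h : IsATTO G lam O) (a : V) :
    IsATTO G lam (flipAt O a) := by
  refine isATTO_iff_forbiddenPath.2 ⟨h.1.isOrientation_flipAt a, ?_⟩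
  rintro x y z hF (⟨hxy, hTx⟩ | Tyx) (⟨hyz, hTy⟩ | Tzy)
  · exact h.not_arc_of_forbiddenPath hF hxy hyz
  · exact hTx ⟨h.arc_of_directedTriangle_of_forbiddenPath_tail hsym Tzy hF hxy, hxy, Tzy.2.2⟩
  · exact hTy ⟨Tyx.1, hyz, h.arc_of_directedTriangle_of_forbiddenPath_head hsym Tyx hF hyz⟩
  · exact h.1.asymm Tyx.1 Tzy.2.2

theorem not_directedTriangle_flipAt (hsym : ∀ a b, lam a b = lam b a) (h : IsATTO G lam O)
    (a : V) {w : V} (hw : ∀ b c, ¬ DirectedTriangle O w b c) (y x : V) :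
    ¬ DirectedTriangle (flipAt O a) w y x := by
  intro T
  have hwy : O w y := of_flipAt_of_not_directedTriangle (fun T' => hw _ _ T'.rotate.rotate) T.1
  have hxw : O x w := of_flipAt_of_not_directedTriangle (fun T' => hw _ _ T'.rotate) T.2.2
  have lyx := ((h.isATTO_flipAt hsym a).isQuasiTTO.label_eq hsym T).2
  rcases T.2.1 with ⟨hyx, -⟩ | ⟨hax, hxy, hya⟩
  · exact hw y x ⟨hwy, hyx, hxw⟩
  · have laxy := h.isQuasiTTO.label_eq hsym ⟨hax, hxy, hya⟩
    obtain ⟨Aaw, -⟩ := h.isQuasiTTO.adj_and_le hax hxw (by have := hsym x y; omega)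
    by_cases haw : O a w
    · exact hw y a ⟨hwy, hya, haw⟩
    · exact hw a x ⟨h.1.of_not Aaw.symm haw, hax, hxw⟩

theorem exists_forall_mem_not_directedTriangle (hsym : ∀ a b, lam a b = lam b a)
    (h : IsATTO G lam O) (S : Finset V) :
    ∃ O', IsATTO G lam O' ∧ ∀ a ∈ S, ∀ b c, ¬ DirectedTriangle O' a b c := by
  classical
  induction S using Finset.induction_on with
  | empty => exact ⟨O, h, by simp⟩
  | insert a S _ ih =>
    obtain ⟨O', hO', hS⟩ := ih
    refine ⟨flipAt O' a, hO'.isATTO_flipAt hsym a, (Finset.forall_mem_insert ..).2 ⟨?_, ?_⟩⟩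
    · exact hO'.1.not_directedTriangle_flipAt_self a
    · exact fun w hw => hO'.not_directedTriangle_flipAt hsym a (hS w hw)

end IsATTO

theorem exists_rel_forall_finset_agree {V : Type*} (O : Finset V → V → V → Prop) :
    ∃ R : V → V → Prop, ∀ s, ∃ t, s ⊆ t ∧ ∀ x ∈ s, ∀ y ∈ s, R x y ↔ O t x y := by
  classical
  obtain ⟨χ, hχ⟩ := Finset.rado_selection (β := fun _ => Prop)
    fun (S : Finset (V × V)) p => O (S.image Prod.fst) p.1 p.2
  refine ⟨fun x y => χ (x, y), fun s => ?_⟩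
  obtain ⟨S, hsS, hagree⟩ := hχ (s ×ˢ s)
  exact ⟨S.image Prod.fst,
    fun x hx => Finset.mem_image_of_mem Prod.fst (hsS (Finset.mk_mem_product hx hx)),
    fun x hx y hy => (hagree (x, y) (Finset.mk_mem_product hx hy)).to_iff⟩

theorem exists_isTTO_of_forall_finset (hsym : ∀ a b, lam a b = lam b a)
    (h : ∀ S : Finset V, ∃ O, IsQuasiTTO G lam O ∧
      ∀ a ∈ S, ∀ b c, ¬ DirectedTriangle O a b c) :
    ∃ O, IsTTO G lam O := by
  classical
  choose O hO hTri using h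
  obtain ⟨R, hR⟩ := exists_rel_forall_finset_agree O
  refine ⟨R, (isTTO_iff hsym).2 ⟨⟨⟨fun a b => ?_, fun a b => ?_⟩, fun a b c => ?_⟩,
    fun a b c => ?_⟩⟩
  · obtain ⟨S, -, hagree⟩ := hR {a, b}
    rw [hagree a (by simp) b (by simp)]
    exact (hO S).1.1 a b
  · obtain ⟨S, -, hagree⟩ := hR {a, b}
    rw [hagree a (by simp) b (by simp), hagree b (by simp) a (by simp)]
    exact (hO S).1.2 a b
  · obtain ⟨S, -, hagree⟩ := hR {a, b, c}
    rw [hagree a (by simp) b (by simp), hagree b (by simp) c (by simp)]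
    exact fun hab hbc => (hO S).adj_and_le hab hbc
  · obtain ⟨S, hS, hagree⟩ := hR {a, b, c}
    rw [DirectedTriangle, hagree a (by simp) b (by simp), hagree b (by simp) c (by simp),
      hagree c (by simp) a (by simp)]
    exact hTri S a (hS (by simp)) b c

theorem IsATTO.exists_isTTO (hsym : ∀ a b, lam a b = lam b a) (h : IsATTO G lam O) :
    ∃ O', IsTTO G lam O' :=
  exists_isTTO_of_forall_finset hsym fun S =>
    (h.exists_forall_mem_not_directedTriangle hsym S).imp fun _ => And.imp_left IsATTO.isQuasiTTO

theorem IsTTO.isATTO (hsym : ∀ a b, lam a b = lam b a) (h : IsTTO G lam O) : IsATTO G lam O := by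
  obtain ⟨hq, hTri⟩ := (isTTO_iff hsym).1 h
  refine isATTO_iff_forbiddenPath.2 ⟨h.1, ?_⟩
  rintro a b c (⟨-, -, hl, hac⟩ | ⟨d, t, hC⟩) hab hbc
  · obtain ⟨Aac, lac⟩ := hq.adj_and_le hab hbc hl
    exact hac.elim (· Aac) lac.not_gt
  · obtain ⟨hda, -⟩ := hq.apex_arcs_of_corrTri hsym hC hab
    obtain ⟨Aca, -, -, lca, -, -, -, lad, -, -, hcd⟩ := hC
    have hac : O a c := h.1.of_not Aca.symm fun hca => hTri a b c ⟨hab, hbc, hca⟩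
    have := hsym a c
    have := hsym a d
    have := hsym c d
    obtain ⟨Adc, ldc⟩ := hq.adj_and_le hda hac (by omega)
    have := hcd Adc.symm
    omega

theorem IsTTO.not_directedCycle (h : IsTTO G lam O) {k : ℕ} [NeZero k] (v : ZMod k → V) :
    ¬ ∀ i, O (v i) (v (i + 1)) := by
  intro hv
  obtain ⟨i, hmax⟩ := Finite.exists_max fun i => lam (v i) (v (i + 1))
  have extend_back : ∀ n : ℕ, O (v (i - n)) (v (i + 1)) ∧
      lam (v i) (v (i + 1)) ≤ lam (v (i - n)) (v (i + 1)) := by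
    intro n
    induction n with
    | zero => simpa only [Nat.cast_zero, sub_zero] using ⟨hv i, le_rfl⟩
    | succ n ih =>
      have harc := hv (i - (n + 1 : ℕ))
      have hle := hmax (i - (n + 1 : ℕ))
      rw [show i - (n + 1 : ℕ) + 1 = i - (n : ZMod k) by push_cast; ring] at harc hle
      obtain ⟨hO, hlam⟩ := h.2 _ _ _ harc ih.1 (hle.trans ih.2)
      exact ⟨hO, ih.2.trans hlam⟩
  obtain ⟨n, hn⟩ := ZMod.natCast_zmod_surjective (-1 : ZMod k)
  have hloop := (extend_back n).1
  rw [hn, sub_neg_eq_add] at hloop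
  exact h.1.irrefl hloop

theorem IsATTO.of_mem_ness (h : IsATTO G lam O) {a b : V} (hab : (a, b) ∈ Ness G lam) : O a b :=
  h.1.of_not hab.1 fun hba => h.1.asymm hba (h.2 (b, a) (a, b) hba hab.2)

theorem IsTTO.nessAcyclic (hsym : ∀ a b, lam a b = lam b a) (h : IsTTO G lam O) :
    NessAcyclic G lam := by
  rintro ⟨k, hk, v, -, hv⟩
  have : NeZero k := ⟨by omega⟩
  exact h.not_directedCycle v fun i => (h.isATTO hsym).of_mem_ness (hv i)

theorem NessAcyclic.notMem_ness_swap (h : NessAcyclic G lam) {a b : V} (hab : (a, b) ∈ Ness G lam) :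
    (b, a) ∉ Ness G lam := by
  intro hba
  have hne : a ≠ b := hab.1.ne
  refine h ⟨2, le_rfl, ![a, b], ?_, ?_⟩
  · exact List.nodup_ofFn.1 (by simpa using hne)
  · exact Fin.forall_fin_two.2 ⟨hab, hba⟩

theorem NessAcyclic.exists_isATTO (h : NessAcyclic G lam) : ∃ O, IsATTO G lam O := by
  let r (d e : G.Dart) : Prop := Forces G lam d.toProd e.toProd
  have : IsPreorder G.Dart r := { refl _ := .refl, trans _ _ _ := .trans }
  obtain ⟨S, hS, hcomplete⟩ := exists_isConsistentClosed_iff_notMem (r := r)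
    SimpleGraph.Dart.symm_involutive (fun _ _ => Forces.swap)
    fun d hd hd' => h.notMem_ness_swap ⟨d.adj, hd'⟩ ⟨d.adj.symm, hd⟩
  refine ⟨fun a b => ∃ hab : G.Adj a b, ⟨(a, b), hab⟩ ∈ S, ⟨fun a b => Exists.fst, ?_⟩, ?_⟩
  · intro a b hab
    have hiff := hcomplete ⟨(a, b), hab⟩
    exact ⟨fun ⟨_, hmem⟩ ⟨_, hmem'⟩ => hiff.1 hmem hmem',
      fun hba => ⟨hab, hiff.2 fun hmem => hba ⟨hab.symm, hmem⟩⟩⟩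
  · rintro p q ⟨hp, hpS⟩ hpq
    exact ⟨hpq.adj hp, hS.1 _ hpS ⟨q, hpq.adj hp⟩ hpq⟩

end Temporal

theorem stmt14_general {V : Type*} (G : SimpleGraph V) (lam : V → V → ℕ)
    (hsym : ∀ a b, lam a b = lam b a) :
    ((∃ O : V → V → Prop, IsTTO G lam O) ↔ (∃ O : V → V → Prop, IsATTO G lam O)) ∧
      ((∃ O : V → V → Prop, IsATTO G lam O) ↔ NessAcyclic G lam) := by
  have tto_of_atto : (∃ O, IsATTO G lam O) → ∃ O, IsTTO G lam O :=
    fun ⟨_, h⟩ => h.exists_isTTO hsym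
  refine ⟨⟨fun ⟨O, h⟩ => ⟨O, h.isATTO hsym⟩, tto_of_atto⟩, fun hA => ?_, fun h => h.exists_isATTO⟩
  obtain ⟨O, h⟩ := tto_of_atto hA
  exact h.nessAcyclic hsym

theorem stmt14 {V : Type*} [Fintype V] (G : SimpleGraph V) (lam : V → V → ℕ)
    (hsym : ∀ a b, lam a b = lam b a) :
    ((∃ O : V → V → Prop, IsTTO G lam O) ↔ (∃ O : V → V → Prop, IsATTO G lam O)) ∧
      ((∃ O : V → V → Prop, IsATTO G lam O) ↔ NessAcyclic G lam) :=
  stmt14_general G lam hsym
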